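/- Let ν > 0 and let k ≥ 2 be an integer. For every η₁ ∈ E_{k+1} and every δ > 0 there exist an integer n ≥ 1, positive real numbers α₁, …, αₙ with α₁ + ⋯ + αₙ = 1, and functions η, ζ¹, …, ζⁿ ∈ E_k such that for every continuously differentiable function u : [0,π] → ℝ one has ( ∫₀^π | η₁(x) − u(x)u′(x) − η(x) + Σⱼ₌₁ⁿ αⱼ ( (u(x)+ζʲ(x))(u′(x)+(ζʲ)′(x)) − ν (ζʲ)″(x) ) |² dx )^{1/2} ≤ δ. -/

import Mathlib

/-!
Averaging over the pair `ζ, -ζ` with weights `1/2` removes every term that is linear in `ζ`, so the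
integrand no longer involves `u`: what remains is `η₁ - η + ζ ζ'`. For `ζ = a sin x + b sin kx`,
the product `ζ ζ'` is a combination of `sin 2x` and `sin (k-1)x`, which lie in `E_k` since `k ≥ 2`
and are absorbed into `η`, of `sin (k+1)x` with coefficient `a b (k+1)/2`, and of `sin 2kx` with
coefficient `b² k/2` (`twoMode_mul_deriv`). Prescribing the product `a b` cancels the top mode of
`η₁`, while `b` may be taken so small that the `sin 2kx` remainder is at most `δ` in `L²`.
-/

open Set intervalIntegral

/-- `sineSpan k` is the real linear span of the functions `x ↦ sin (j x)` for `1 ≤ j ≤ k`,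
regarded as a subspace of the space of functions from `ℝ` to `ℝ`. -/
def sineSpan (k : ℕ) : Submodule ℝ (ℝ → ℝ) :=
  Submodule.span ℝ {f : ℝ → ℝ | ∃ j : ℕ, 1 ≤ j ∧ j ≤ k ∧ f = fun x => Real.sin (j * x)}

lemma sin_mem_sineSpan {j k : ℕ} (hj : 1 ≤ j) (hjk : j ≤ k) :
    (fun x : ℝ => Real.sin (j * x)) ∈ sineSpan k :=
  Submodule.subset_span ⟨j, hj, hjk, rfl⟩

/-- An element of `E_{k+1}` is an element of `E_k` plus a multiple of the top mode. -/
lemma exists_top_mode {k : ℕ} {f : ℝ → ℝ} (hf : f ∈ sineSpan (k + 1)) :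
    ∃ g ∈ sineSpan k, ∃ c : ℝ, ∀ x, f x = g x + c * Real.sin ((k + 1) * x) := by
  induction hf using Submodule.span_induction with
  | mem f h =>
    obtain ⟨j, h1, h2, rfl⟩ := h
    rcases Nat.lt_or_ge k j with h | h
    · obtain rfl : j = k + 1 := by omega
      exact ⟨0, Submodule.zero_mem _, 1, fun x => by simp⟩
    · exact ⟨_, sin_mem_sineSpan h1 h, 0, fun x => by simp⟩
  | zero => exact ⟨0, Submodule.zero_mem _, 0, fun x => by simp⟩
  | add f₁ f₂ _ _ h₁ h₂ =>
    obtain ⟨g₁, hg₁, c₁, h₁⟩ := h₁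
    obtain ⟨g₂, hg₂, c₂, h₂⟩ := h₂
    refine ⟨g₁ + g₂, Submodule.add_mem _ hg₁ hg₂, c₁ + c₂, fun x => ?_⟩
    simp only [Pi.add_apply, h₁, h₂]
    ring
  | smul r f _ h =>
    obtain ⟨g, hg, c, h⟩ := h
    refine ⟨r • g, Submodule.smul_mem _ r hg, r * c, fun x => ?_⟩
    simp only [Pi.smul_apply, smul_eq_mul, h]
    ring

/-- The two-mode function `a sin x + b sin kx`. -/
noncomputable def twoMode (k : ℕ) (a b : ℝ) : ℝ → ℝ :=
  fun x => a * Real.sin x + b * Real.sin (k * x)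

lemma twoMode_mem {k : ℕ} (hk : 1 ≤ k) (a b : ℝ) : twoMode k a b ∈ sineSpan k := by
  have h := Submodule.add_mem _ (Submodule.smul_mem _ a (sin_mem_sineSpan le_rfl hk))
    (Submodule.smul_mem _ b (sin_mem_sineSpan hk le_rfl))
  convert h using 1
  ext x
  simp [twoMode]

lemma deriv_twoMode (k : ℕ) (a b x : ℝ) :
    deriv (twoMode k a b) x = a * Real.cos x + b * (k * Real.cos (k * x)) := by
  have h1 : HasDerivAt (fun y : ℝ => Real.sin (k * y)) (Real.cos (k * x) * (k * 1)) x :=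
    ((hasDerivAt_id x).const_mul (k : ℝ)).sin
  have h := ((Real.hasDerivAt_sin x).const_mul a).add (h1.const_mul b)
  refine (h.deriv.trans ?_)
  ring

/-- The Fourier expansion of `ζ ζ'` for `ζ = a sin x + b sin kx`. -/
lemma twoMode_mul_deriv (k : ℕ) (a b x : ℝ) :
    twoMode k a b x * deriv (twoMode k a b) x =
      a ^ 2 / 2 * Real.sin (2 * x) - a * b * (k - 1) / 2 * Real.sin ((k - 1) * x)
        + a * b * (k + 1) / 2 * Real.sin ((k + 1) * x)
        + b ^ 2 * k / 2 * Real.sin (2 * (k * x)) := by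
  rw [deriv_twoMode, twoMode, sub_mul, add_mul (k : ℝ) 1 x, one_mul, Real.sin_sub, Real.sin_add,
    Real.sin_two_mul, Real.sin_two_mul]
  ring

/-- Lemma 5.1 of the paper specialized to `N = E₁`, `G = E_k` (using `F(E₁,E_k) = E_{k+1}`):
the nonlinear term `B(u) = u u'` can be compensated, uniformly in `u`, by a convex
combination of shifted nonlinear terms. -/
theorem convexification_lemma
    (ν : ℝ) (hν : 0 < ν) (k : ℕ) (hk : 2 ≤ k)
    (η₁ : ℝ → ℝ) (hη₁ : η₁ ∈ sineSpan (k + 1)) (δ : ℝ) (hδ : 0 < δ) :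
    ∃ (n : ℕ) (α : Fin n → ℝ) (η : ℝ → ℝ) (ζ : Fin n → ℝ → ℝ),
      1 ≤ n ∧ (∀ j, 0 < α j) ∧ (∑ j, α j = 1) ∧ η ∈ sineSpan k ∧ (∀ j, ζ j ∈ sineSpan k) ∧
      ∀ u : ℝ → ℝ, ContDiff ℝ 1 u →
        Real.sqrt (∫ x in (0:ℝ)..Real.pi,
            (η₁ x - u x * deriv u x -
              (η x - ∑ j, α j *
                ((u x + ζ j x) * (deriv u x + deriv (ζ j) x) - ν * deriv (deriv (ζ j)) x))) ^ 2)
          ≤ δ := by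
  obtain ⟨g, hg, c, hgc⟩ := exists_top_mode hη₁
  have hk0 : (0 : ℝ) < k := by exact_mod_cast (by omega : 0 < k)
  -- `b² k = δ` bounds the remainder; `a b (k + 1) / 2 = -c` cancels the top mode of `η₁`.
  set b : ℝ := Real.sqrt (δ / k) with hb
  have hbpos : 0 < b := Real.sqrt_pos.2 (by positivity)
  have hb2 : b ^ 2 * k = δ := by
    rw [hb, Real.sq_sqrt (by positivity)]
    field_simp
  obtain ⟨a, ha⟩ : ∃ a : ℝ, a * b * (k + 1) / 2 = -c :=
    ⟨-2 * c / ((k + 1) * b), by field_simp⟩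
  have hneg (x : ℝ) : twoMode k (-a) (-b) x = -twoMode k a b x := by
    simp only [twoMode]
    ring
  have hfun : twoMode k (-a) (-b) = fun x => -twoMode k a b x := funext hneg
  have hd : deriv (twoMode k (-a) (-b)) = fun x => -deriv (twoMode k a b) x := by
    ext x
    rw [hfun, deriv.fun_neg]
  have hdd (x : ℝ) :
      deriv (deriv (twoMode k (-a) (-b))) x = -deriv (deriv (twoMode k a b)) x := by
    rw [hd, deriv.fun_neg]
  refine ⟨2, fun _ => 1 / 2,
    g + (a ^ 2 / 2) • (fun x => Real.sin ((2 : ℕ) * x))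
      + (-(a * b * (k - 1) / 2)) • (fun x => Real.sin ((k - 1 : ℕ) * x)),
    ![twoMode k a b, twoMode k (-a) (-b)], by norm_num, fun _ => by norm_num, by norm_num,
    ?_, ?_, fun u _ => ?_⟩
  · exact Submodule.add_mem _ (Submodule.add_mem _ hg
      (Submodule.smul_mem _ _ (sin_mem_sineSpan (by norm_num) hk)))
      (Submodule.smul_mem _ _ (sin_mem_sineSpan (by omega) (by omega)))
  · intro j
    fin_cases j
    · exact twoMode_mem (by omega) _ _
    · exact twoMode_mem (by omega) _ _
  · rw [integral_congr (g := fun x => (δ / 2 * Real.sin (2 * (k * x))) ^ 2)]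
    · refine Real.sqrt_le_iff.2 ⟨hδ.le, ?_⟩
      have hle : ∫ x in (0:ℝ)..Real.pi, (δ / 2 * Real.sin (2 * (k * x))) ^ 2
          ≤ ∫ _ in (0:ℝ)..Real.pi, (δ / 2) ^ 2 := by
        refine integral_mono_on Real.pi_pos.le
          (Continuous.intervalIntegrable (by fun_prop) _ _)
          (Continuous.intervalIntegrable (by fun_prop) _ _) fun x _ => ?_
        rw [mul_pow]
        exact mul_le_of_le_one_right (sq_nonneg _) (Real.sin_sq_le_one _)
      rw [integral_const, smul_eq_mul] at hle
      nlinarith [Real.pi_le_four, sq_nonneg δ]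
    · intro x _
      have hm := twoMode_mul_deriv k a b x
      rw [ha, hb2] at hm
      simp only [Fin.sum_univ_two, Matrix.cons_val_zero, Matrix.cons_val_one, hneg, hdd, hgc,
        Pi.add_apply, Pi.smul_apply, smul_eq_mul, Nat.cast_sub (by omega : 1 ≤ k), Nat.cast_one,
        Nat.cast_ofNat]
      rw [hd]
      congr 1
      linear_combination hm
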